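/- arXiv:1707.07789 — 2 statements merged into one kernel-verified Lean document; each statement's English description precedes it below -/
import Mathlib

section
/- Let D_n = ⟨x, a | xⁿ = a² = e, ax = x⁻¹a⟩ be the dihedral group of order 2n, with cyclic subgroup C_n = ⟨x⟩. Let v > 2 be an even positive divisor of n, l = n/v, and suppose X ⊆ C_n satisfies: (i) X = T⟨x^v⟩ for some T ⊆ {x, x², …, x^{v−1}}; (ii) in the group ring ℤ[C_n], X̄ + X̄⁽⁻¹⁾ = C̄_n − ⟨x^v⟩‾ + (x^{v/2}⟨x^v⟩)‾ (i.e. the multiset X ⊎ X⁽⁻¹⁾ equals (C_n \ ⟨x^v⟩) ⊎ x^{v/2}⟨x^v⟩); and (iii) X ∪ x^{v/2}X = C_n. Then the Cayley graph C(D_n, X ∪ Xa) is a directed strongly regular graph with parameters (2n, n, n/2 + l, n/2 − l, n/2 + l). -/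
/-!
Let `S = X ∪ Xa`. Since
`(1 + a) X̄ (1 + a) = (X̄ + X̄⁽⁻¹⁾)(1 + a)`, the group ring square is
`S̄² = X̄ (X̄ + X̄⁽⁻¹⁾)(1 + a)`. Write `H = ⟨x^v⟩` and `b = x^(v/2)`. By hypothesis
`X̄ + X̄⁽⁻¹⁾ = C̄ₙ - H̄ + b H̄`. Here `X̄ H̄ = l X̄` because `X` is a union of cosets of `H`.
Counting in the multiset identity gives `2|X| = n`, so the cover `X ∪ bX = Cₙ` is a partition and
`b X̄ = C̄ₙ - X̄`. Hence `X̄ (X̄ + X̄⁽⁻¹⁾) = (n/2 + l) C̄ₙ - 2l X̄`, and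
`S̄² = (n/2 + l) Ḡ - 2l S̄`, which is the DSRG equation with `t = μ = n/2 + l` and
`λ = μ - 2l`.

The formal proof replaces products in the group ring by convolution sums of indicator functions:
`convolution_add_correlation` is the formula for `X̄ (X̄ + X̄⁽⁻¹⁾)`, and `sum_dihedral_conv` is the
formula for `S̄²`.
-/

open Matrix

/-- The all-ones matrix. -/
def allOnes (V : Type*) [Fintype V] : Matrix V V ℤ :=
  Matrix.of fun _ _ => (1 : ℤ)

/-- `A` is the adjacency matrix of a directed strongly regular graph with
parameters `(n, k, μ, λ, t)`. -/
def IsDSRG {V : Type*} [Fintype V] [DecidableEq V] (A : Matrix V V ℤ)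
    (n k μ lam t : ℤ) : Prop :=
  (Fintype.card V : ℤ) = n ∧
  (∀ i j, A i j = 0 ∨ A i j = 1) ∧
  (∀ i, A i i = 0) ∧
  A * allOnes V = k • allOnes V ∧
  allOnes V * A = k • allOnes V ∧
  A * A = t • (1 : Matrix V V ℤ) + lam • A + μ • (allOnes V - 1 - A)

/-- The adjacency matrix of the Cayley graph `C(G, S)`. -/
def cayleyAdj (G : Type*) [Group G] [Fintype G] [DecidableEq G] (S : Finset G) :
    Matrix G G ℤ :=
  Matrix.of fun x y => if y * x⁻¹ ∈ S then (1 : ℤ) else 0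

/-- The connection set `X ∪ Ya ⊆ D_n`, where `X, Y ⊆ C_n = ⟨x⟩` are identified
with subsets of `ZMod n` (the exponent of `x = r 1`), and `a = sr 0`. -/
def dihedralS (n : ℕ) (X Y : Finset (ZMod n)) : Finset (DihedralGroup n) :=
  X.image DihedralGroup.r ∪
    Y.image fun i => DihedralGroup.r i * DihedralGroup.sr 0

/-- `Z̄ = ∑_{g ∈ Z} g` in the group ring `ℤ[C_n]` of the cyclic group `C_n`,
realised as `AddMonoidAlgebra ℤ (ZMod n)`. -/
noncomputable def cycBar (n : ℕ) (Z : Finset (ZMod n)) : AddMonoidAlgebra ℤ (ZMod n) :=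
  ∑ i ∈ Z, AddMonoidAlgebra.single i 1


/-- The coset `x^a·⟨x^v⟩` of the subgroup `⟨x^v⟩` of `C_n ≅ ZMod n`, where
`l = n/v` is the order of `⟨x^v⟩`. -/
def vCoset (n v l a : ℕ) : Finset (ZMod n) :=
  (Finset.range l).image fun j => ((a + v * j : ℕ) : ZMod n)

/-- The group-ring element `(x^a⟨x^v⟩)‾ = ∑_{j<l} x^{a+vj}` of `ℤ[C_n]`. -/
noncomputable def vCosetBar (n v l a : ℕ) : AddMonoidAlgebra ℤ (ZMod n) :=
  ∑ j ∈ Finset.range l, AddMonoidAlgebra.single (((a + v * j : ℕ) : ZMod n)) 1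

open Finset in
/-- Pairing the group ring identity with an arbitrary function `g` on `ZMod n`. -/
lemma sum_of_hmulti (n v l : ℕ) [NeZero n] (X : Finset (ZMod n))
    (hmulti : cycBar n X + cycBar n (X.image (fun i => -i)) =
      cycBar n Finset.univ - vCosetBar n v l 0 + vCosetBar n v l (v / 2))
    (g : ZMod n → ℤ) :
    ∑ i ∈ X, g i + ∑ i ∈ X, g (-i) =
      ∑ i, g i - ∑ j ∈ range l, g ((v * j : ℕ) : ZMod n)
        + ∑ j ∈ range l, g ((v / 2 + v * j : ℕ) : ZMod n) := by
  have h1 : ∑ i ∈ X.image (fun i => -i), g i = ∑ i ∈ X, g (-i) :=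
    sum_image fun a _ b _ h => neg_injective h
  let L : AddMonoidAlgebra ℤ (ZMod n) →+ ℤ :=
    { toFun := fun p => ∑ i, p.coeff i * g i
      map_zero' := by simp
      map_add' := fun p q => by simp [add_mul, sum_add_distrib] }
  have hL : ∀ i, L (AddMonoidAlgebra.single i 1) = g i := fun i => by
    simp [L, Finsupp.single_apply]
  have h := congrArg L hmulti
  simpa only [cycBar, vCosetBar, map_add, map_sub, map_sum, hL, h1, zero_add] using h

/-- `X` is invariant under translation by `v`, hence by every multiple of `v`. -/
lemma sub_mem_iff_of_cosets (n v l : ℕ) [NeZero n] (hn : n = v * l) (T : Finset ℕ) (c : ZMod n)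
    (j : ℕ) :
    c - ((v * j : ℕ) : ZMod n) ∈ T.biUnion (vCoset n v l) ↔ c ∈ T.biUnion (vCoset n v l) := by
  have hl : 0 < l := Nat.pos_of_ne_zero fun h => NeZero.ne n (by simp [hn, h])
  -- Reducing `j` modulo `l` does not change the class of `v * j` modulo `n = v * l`.
  have hmod : ∀ j : ℕ, ((v * (j % l) : ℕ) : ZMod n) = ((v * j : ℕ) : ZMod n) := fun j => by
    rw [ZMod.natCast_eq_natCast_iff, hn]
    exact (Nat.mod_modEq j l).mul_left' v
  have hadd : ∀ (d : ZMod n) (j : ℕ), d ∈ T.biUnion (vCoset n v l) →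
      d + ((v * j : ℕ) : ZMod n) ∈ T.biUnion (vCoset n v l) := by
    intro d j hd
    simp only [Finset.mem_biUnion, vCoset, Finset.mem_image, Finset.mem_range] at hd ⊢
    obtain ⟨a, ha, i, -, rfl⟩ := hd
    refine ⟨a, ha, (i + j) % l, Nat.mod_lt _ hl, ?_⟩
    rw [Nat.cast_add, hmod]
    push_cast
    ring
  constructor
  · intro h
    simpa using hadd _ j h
  · intro h
    -- Subtracting `v * j` is the same as adding `v * (l * j - j)`.
    have h2 := hadd c (l * j - j) h
    have h3 : ((v * (l * j - j) : ℕ) : ZMod n) = -((v * j : ℕ) : ZMod n) := by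
      rw [eq_neg_iff_add_eq_zero, ← Nat.cast_add, ← mul_add,
        Nat.sub_add_cancel (Nat.le_mul_of_pos_left j hl), ← mul_assoc, ← hn]
      simp
    rwa [h3, ← sub_eq_add_neg] at h2

lemma zero_notMem_of_cosets (n v l : ℕ) (hn : n = v * l) (T : Finset ℕ)
    (hT : T ⊆ Finset.Ioo 0 v) : (0 : ZMod n) ∉ T.biUnion (vCoset n v l) := by
  simp only [Finset.mem_biUnion, vCoset, Finset.mem_image, not_exists, not_and]
  intro a ha j _ h
  obtain ⟨h0, h1⟩ := Finset.mem_Ioo.1 (hT ha)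
  rw [ZMod.natCast_eq_zero_iff] at h
  have h2 : v ∣ a + v * j := (Dvd.intro l hn.symm).trans h
  have h3 : v ∣ a := (Nat.dvd_add_left (Dvd.intro j rfl)).1 h2
  exact absurd (Nat.le_of_dvd h0 h3) (by omega)

/-- A set of size `n / 2` that covers `ZMod n` together with its translate by `b` is disjoint
from that translate. -/
lemma indicator_sub_half (n : ℕ) [NeZero n] (b : ZMod n) (X : Finset (ZMod n))
    (hcard : 2 * X.card = n) (hcover : X ∪ X.image (fun i => i + b) = Finset.univ) (c : ZMod n) :
    (if c - b ∈ X then (1 : ℤ) else 0) = 1 - if c ∈ X then 1 else 0 := by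
  have hc : (X.image (fun i => i + b)).card = X.card :=
    Finset.card_image_of_injective _ (add_left_injective b)
  have hu := Finset.card_union_add_card_inter X (X.image (fun i => i + b))
  rw [hcover, hc, Finset.card_univ, ZMod.card] at hu
  have hi : X ∩ X.image (fun i => i + b) = ∅ := Finset.card_eq_zero.1 (by omega)
  have hm : c ∈ X.image (fun i => i + b) ↔ c - b ∈ X := by
    simp only [Finset.mem_image, ← eq_sub_iff_add_eq, exists_eq_right]
  have h1 : c ∈ X ∪ X.image (fun i => i + b) := hcover ▸ Finset.mem_univ c
  have h2 : c ∉ X ∩ X.image (fun i => i + b) := by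
    rw [hi]
    exact Finset.notMem_empty c
  rw [Finset.mem_union, hm] at h1
  rw [Finset.mem_inter, hm] at h2
  by_cases hX : c ∈ X <;> by_cases hY : c - b ∈ X <;> simp_all

/-- The coefficient of `x^c` in `X̄ (X̄ + X̄⁽⁻¹⁾) = (n/2 + l) C̄ₙ - 2l X̄`. -/
lemma convolution_add_correlation (n v l : ℕ) [NeZero n] (X : Finset (ZMod n))
    (hsum : ∀ g : ZMod n → ℤ, ∑ i ∈ X, g i + ∑ i ∈ X, g (-i) =
      ∑ i, g i - ∑ j ∈ Finset.range l, g ((v * j : ℕ) : ZMod n)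
        + ∑ j ∈ Finset.range l, g ((v / 2 + v * j : ℕ) : ZMod n))
    (hper : ∀ (c : ZMod n) (j : ℕ), c - ((v * j : ℕ) : ZMod n) ∈ X ↔ c ∈ X)
    (hhalf : ∀ c : ZMod n, (if c - ((v / 2 : ℕ) : ZMod n) ∈ X then (1 : ℤ) else 0)
      = 1 - if c ∈ X then 1 else 0) (c : ZMod n) :
    ∑ i ∈ X, (if c - i ∈ X then (1 : ℤ) else 0) + ∑ i ∈ X, (if c + i ∈ X then (1 : ℤ) else 0) =
      X.card + l - 2 * l * if c ∈ X then 1 else 0 := by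
  have h := hsum fun i => if c - i ∈ X then 1 else 0
  have h1 : ∑ i, (if c - i ∈ X then (1 : ℤ) else 0) = X.card := by
    refine (Equiv.sum_comp (Equiv.subLeft c) fun i => if i ∈ X then (1 : ℤ) else 0).trans ?_
    simp
  have h2 : ∀ j : ℕ, (if c - ((v / 2 + v * j : ℕ) : ZMod n) ∈ X then (1 : ℤ) else 0)
      = 1 - if c ∈ X then 1 else 0 := fun j => by
    rw [← hhalf, Nat.cast_add, ← sub_sub]
    simp only [hper]
  simp only [h1, h2, hper, Finset.sum_const, Finset.card_range, nsmul_eq_mul,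
    sub_neg_eq_add] at h
  rw [h]
  ring

lemma sum_dihedralGroup (n : ℕ) [NeZero n] (F : DihedralGroup n → ℤ) :
    ∑ g, F g = ∑ i, F (.r i) + ∑ i, F (.sr i) := by
  rw [← Equiv.sum_comp DihedralGroup.equivSum.symm, Fintype.sum_sum_type]
  rfl

lemma r_mem_dihedralS (n : ℕ) (X : Finset (ZMod n)) (i : ZMod n) :
    DihedralGroup.r i ∈ dihedralS n X X ↔ i ∈ X := by
  simp [dihedralS]

lemma sr_mem_dihedralS (n : ℕ) (X : Finset (ZMod n)) (i : ZMod n) :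
    DihedralGroup.sr i ∈ dihedralS n X X ↔ -i ∈ X := by
  simp [dihedralS, neg_eq_iff_eq_neg]

lemma sum_dihedralS (n : ℕ) [NeZero n] (X : Finset (ZMod n)) :
    ∑ g, (if g ∈ dihedralS n X X then (1 : ℤ) else 0) = 2 * X.card := by
  rw [sum_dihedralGroup]
  simp only [r_mem_dihedralS, sr_mem_dihedralS]
  have h : ∑ i, (if -i ∈ X then (1 : ℤ) else 0) = ∑ i, if i ∈ X then 1 else 0 :=
    Equiv.sum_comp (Equiv.neg (ZMod n)) fun i => if i ∈ X then (1 : ℤ) else 0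
  rw [h]
  simp [two_mul]

/-- The coefficient of `g` in `S̄²`, where `S = X ∪ Xa`. -/
lemma sum_dihedral_conv (n : ℕ) [NeZero n] (X : Finset (ZMod n)) (p q : ℤ)
    (hconv : ∀ c : ZMod n, ∑ i ∈ X, (if c - i ∈ X then (1 : ℤ) else 0)
      + ∑ i ∈ X, (if c + i ∈ X then (1 : ℤ) else 0) = p - q * if c ∈ X then 1 else 0)
    (g : DihedralGroup n) :
    ∑ w, (if w ∈ dihedralS n X X then (1 : ℤ) else 0) *
      (if g * w⁻¹ ∈ dihedralS n X X then 1 else 0) =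
      p - q * if g ∈ dihedralS n X X then 1 else 0 := by
  have key : ∀ F : ZMod n → ℤ, ∑ i, (if i ∈ X then (1 : ℤ) else 0) * F i = ∑ i ∈ X, F i :=
    fun F => by simp [Finset.sum_ite_mem]
  have keyneg : ∀ F : ZMod n → ℤ,
      ∑ i, (if -i ∈ X then (1 : ℤ) else 0) * F i = ∑ i ∈ X, F (-i) := fun F => by
    rw [← key, ← Equiv.sum_comp (Equiv.neg (ZMod n))]
    simp
  rw [sum_dihedralGroup]
  cases g with
  | r c =>
    simp only [DihedralGroup.inv_r, DihedralGroup.inv_sr, DihedralGroup.r_mul_r,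
      DihedralGroup.r_mul_sr, r_mem_dihedralS, sr_mem_dihedralS, key, keyneg]
    rw [← hconv c]
    congr! 4 <;> abel_nf
  | sr c =>
    simp only [DihedralGroup.inv_r, DihedralGroup.inv_sr, DihedralGroup.sr_mul_r,
      DihedralGroup.sr_mul_sr, r_mem_dihedralS, sr_mem_dihedralS, key, keyneg]
    rw [← hconv (-c), add_comm]
    congr! 4 <;> abel_nf

/-- Construction: let `v > 2` be an even positive divisor of `n`, `l = n/v`, and
let `X = T⟨x^v⟩ ⊆ C_n` (nontrivial cosets) with
`X̄ + X̄⁽⁻¹⁾ = C̄_n − ⟨x^v⟩‾ + (x^{v/2}⟨x^v⟩)‾` and `X ∪ x^{v/2}X = C_n`.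
Then `C(D_n, X ∪ Xa)` is a DSRG with parameters `(2n, n, n/2 + l, n/2 − l, n/2 + l)`. -/
theorem dihedral_construction_even (n v l : ℕ) [NeZero n]
    (hv2 : 2 < v) (heven : Even v) (hn : n = v * l)
    (X : Finset (ZMod n))
    (hT : ∃ T ⊆ Finset.Ioo 0 v, X = T.biUnion (vCoset n v l))
    (hmulti : cycBar n X + cycBar n (X.image (fun i => -i)) =
      cycBar n Finset.univ - vCosetBar n v l 0 + vCosetBar n v l (v / 2))
    (hcover : X ∪ X.image (fun i => i + ((v / 2 : ℕ) : ZMod n)) = Finset.univ) :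
    IsDSRG (cayleyAdj (DihedralGroup n) (dihedralS n X X))
      (2 * n) (n : ℤ) ((n : ℤ) / 2 + l) ((n : ℤ) / 2 - l) ((n : ℤ) / 2 + l) := by
  obtain ⟨T, hT, hX⟩ := hT
  have hsum := sum_of_hmulti n v l X hmulti
  have hcard : 2 * X.card = n := by
    have h := hsum fun _ => 1
    simp only [Finset.sum_const, Finset.card_univ, ZMod.card, nsmul_eq_mul, mul_one] at h
    omega
  have hper : ∀ (c : ZMod n) (j : ℕ), c - ((v * j : ℕ) : ZMod n) ∈ X ↔ c ∈ X := fun c j => by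
    rw [hX]
    exact sub_mem_iff_of_cosets n v l hn T c j
  have hconv := convolution_add_correlation n v l X hsum hper
    (indicator_sub_half n _ X hcard hcover)
  have hdiv : (n : ℤ) / 2 = X.card := by omega
  have hdeg : ∑ g, (if g ∈ dihedralS n X X then (1 : ℤ) else 0) = n := by
    rw [sum_dihedralS]
    exact_mod_cast hcard
  have hone : (1 : DihedralGroup n) ∉ dihedralS n X X := by
    rw [DihedralGroup.one_def, r_mem_dihedralS, hX]
    exact zero_notMem_of_cosets n v l hn T hT
  rw [hdiv]
  refine ⟨?_, ?_, ?_, ?_, ?_, ?_⟩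
  · rw [DihedralGroup.card]
    push_cast
    rfl
  · intro x y
    simp only [cayleyAdj, Matrix.of_apply]
    split_ifs <;> simp
  · intro x
    simp [cayleyAdj, hone]
  · ext x y
    simp only [cayleyAdj, allOnes, Matrix.mul_apply, Matrix.of_apply, Matrix.smul_apply, mul_one,
      smul_eq_mul]
    rw [← hdeg]
    exact Equiv.sum_comp (Equiv.mulRight x⁻¹) fun g => if g ∈ dihedralS n X X then (1 : ℤ) else 0
  · ext x y
    simp only [cayleyAdj, allOnes, Matrix.mul_apply, Matrix.of_apply, Matrix.smul_apply, mul_one,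
      one_mul, smul_eq_mul]
    rw [← hdeg, ← Equiv.sum_comp (Equiv.divLeft y) fun g =>
      if g ∈ dihedralS n X X then (1 : ℤ) else 0]
    simp only [Equiv.divLeft_apply, div_eq_mul_inv]
  · ext x y
    have h := sum_dihedral_conv n X _ _ hconv (y * x⁻¹)
    -- Substitute `z = w * x` for the midpoint `z` of a path `x → z → y`.
    rw [← Equiv.sum_comp (Equiv.mulRight x⁻¹)] at h
    simp only [Equiv.coe_mulRight, _root_.mul_inv_rev, inv_inv, mul_assoc, inv_mul_cancel_left] at h
    simp only [cayleyAdj, allOnes, Matrix.mul_apply, Matrix.of_apply, Matrix.smul_apply,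
      Matrix.add_apply, Matrix.sub_apply, smul_eq_mul]
    refine h.trans ?_
    ring
end

section
/- Let D_n = ⟨x, a | xⁿ = a² = e, ax = x⁻¹a⟩ be the dihedral group of order 2n, with cyclic subgroup C_n = ⟨x⟩. Let v be an odd positive divisor of n, l = n/v, and suppose X, Y ⊆ C_n satisfy: (i) Y = T⟨x^v⟩ for some T ⊆ {e, x, …, x^{v−1}} with e ∈ T, and X = Y \ ⟨x^v⟩ (so Y = X ∪ ⟨x^v⟩ with X ∩ ⟨x^v⟩ = ∅); and (ii) in the group ring ℤ[C_n], Ȳ + Ȳ⁽⁻¹⁾ = C̄_n + ⟨x^v⟩‾ (i.e. the multiset Y ⊎ Y⁽⁻¹⁾ equals C_n ⊎ ⟨x^v⟩). Then the Cayley graph C(D_n, X ∪ Ya) is a directed strongly regular graph with parameters (2n, n, (n+l)/2, (n−l)/2, (n+l)/2). -/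
/-!
Write `H = ⟨x^v⟩`, a subgroup of order `l`, and let `x, y, h` be the indicator functions of
`X, Y, H` on `ZMod n`. The hypotheses say `x = y - h` with `y` an `H`-periodic function, and
`y (i) + y (-i) = 1 + h (i)`; summing the latter gives `2|Y| = n + l`.

In the group ring of `D_n`, with `S = X + Ya` and `C = C_n`, one has
`S² = X² + Y Y⁽⁻¹⁾ + (X Y + Y X⁽⁻¹⁾) a`. Periodicity gives `H Y = l Y` and `H H = l H`, and
substituting `X = Y - H`, `Y⁽⁻¹⁾ = C + H - Y` yields
`X² + Y Y⁽⁻¹⁾ = |Y| C - l X` and `Y (X + X⁽⁻¹⁾) = |Y| C - l Y`. Hence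
`S² = |Y| D_n - l S`, which is the equation of a DSRG with `t = μ = |Y|` and `λ = |Y| - l`.
The two convolution identities are `sq_coeff_r` and `sq_coeff_sr`; `cayley_isDSRG` translates an
equation for the coefficients of `S²` into the matrix equation.
-/

open Matrix

/-- The `ℤ`-valued indicator function of a finite set. -/
def ind {α : Type*} [DecidableEq α] (Z : Finset α) (i : α) : ℤ := if i ∈ Z then 1 else 0

lemma sum_ind {α : Type*} [DecidableEq α] [Fintype α] (Z : Finset α) :
    ∑ i, ind Z i = (Z.card : ℤ) := by
  simp [ind]

lemma sum_dihedral {n : ℕ} [NeZero n] (f : DihedralGroup n → ℤ) :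
    ∑ g, f g = ∑ i : ZMod n, f (.r i) + ∑ i : ZMod n, f (.sr i) := by
  rw [← DihedralGroup.equivSum.symm.sum_comp, Fintype.sum_sum_type]
  rfl

/-- If `1 ∉ S`, then `C(G, S)` is a DSRG as soon as `S̄² = μ Ḡ - (μ - λ) S̄` in the group ring, the equation
being stated coefficientwise; in this case `t = μ`. -/
lemma cayley_isDSRG {G : Type*} [Group G] [Fintype G] [DecidableEq G] (S : Finset G)
    (n k μ lam : ℤ) (hn : (Fintype.card G : ℤ) = n) (h1 : 1 ∉ S) (hk : (S.card : ℤ) = k)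
    (hsq : ∀ g, ∑ s, ind S s * ind S (g * s⁻¹) = μ - (μ - lam) * ind S g) :
    IsDSRG (cayleyAdj G S) n k μ lam μ := by
  refine ⟨hn, ?_, ?_, ?_, ?_, ?_⟩
  · intro i j
    by_cases h : j * i⁻¹ ∈ S <;> simp [cayleyAdj, h]
  · intro i
    simp [cayleyAdj, h1]
  · ext i j
    have : ∑ y, ind S (y * i⁻¹) = ∑ y, ind S y := Equiv.sum_comp (Equiv.mulRight i⁻¹) (ind S)
    rw [sum_ind, hk] at this
    simpa [Matrix.mul_apply, allOnes, cayleyAdj, ind] using this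
  · ext i j
    have : ∑ y, ind S (j * y⁻¹) = ∑ y, ind S y :=
      Equiv.sum_comp ((Equiv.inv G).trans (Equiv.mulLeft j)) (ind S)
    rw [sum_ind, hk] at this
    simpa [Matrix.mul_apply, allOnes, cayleyAdj, ind] using this
  · ext i j
    have h2 : (cayleyAdj G S * cayleyAdj G S) i j =
        ∑ s, ind S s * ind S (j * i⁻¹ * s⁻¹) := by
      rw [Matrix.mul_apply, ← Equiv.sum_comp (Equiv.mulRight i)]
      refine Finset.sum_congr rfl fun s _ => ?_
      simp [cayleyAdj, ind, mul_assoc]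
    rw [h2, hsq]
    simp only [Matrix.add_apply, Matrix.sub_apply, Matrix.smul_apply, allOnes, Matrix.of_apply,
      cayleyAdj, smul_eq_mul, ind]
    ring

section Convolution

variable {n : ℕ} [NeZero n] {x y h : ZMod n → ℤ} {l m : ℤ}

/-- The coefficient of `x^i` in `(X + Ya)²`. -/
lemma sq_coeff_r (hx : ∀ i, x i = y i - h i) (hy : ∀ i, y i + y (-i) = 1 + h i)
    (hhy : ∀ i j, h j * y (i - j) = h j * y i) (hhh : ∀ i j, h j * h (i - j) = h j * h i)
    (hl : ∑ i, h i = l) (hm : ∑ i, y i = m) (i : ZMod n) :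
    ∑ j, x j * x (i - j) + ∑ j, y (-j) * y (i - j) = m - l * x i := by
  have reflect (f : ZMod n → ℤ) : ∑ j, f (i - j) = ∑ j, f j := Equiv.sum_comp (Equiv.subLeft i) f
  have e1 : ∑ j, h j * y (i - j) = l * y i := by
    rw [Finset.sum_congr rfl fun j _ => hhy i j, ← Finset.sum_mul, hl]
  have e2 : ∑ j, h j * h (i - j) = l * h i := by
    rw [Finset.sum_congr rfl fun j _ => hhh i j, ← Finset.sum_mul, hl]
  have e3 : ∑ j, y j * h (i - j) = l * y i := by
    rw [← e1, ← reflect fun j => h j * y (i - j)]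
    exact Finset.sum_congr rfl fun j _ => by rw [sub_sub_cancel, mul_comm]
  have e4 : ∑ j, y (i - j) = m := by rw [reflect, hm]
  have key : ∀ j, x j * x (i - j) + y (-j) * y (i - j) =
      y (i - j) - y j * h (i - j) + h j * h (i - j) := fun j => by
    rw [hx, hx, eq_sub_of_add_eq' (hy j)]
    ring
  rw [← Finset.sum_add_distrib, Finset.sum_congr rfl fun j _ => key j, Finset.sum_add_distrib,
    Finset.sum_sub_distrib, e2, e3, e4, hx]
  ring

/-- The coefficient of `x^(-i) a` in `(X + Ya)²`. -/
lemma sq_coeff_sr (hx : ∀ i, x i = y i - h i) (hy : ∀ i, y i + y (-i) = 1 + h i)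
    (hneg : ∀ i, h (-i) = h i) (hhy : ∀ i j, h j * y (i - j) = h j * y i)
    (hl : ∑ i, h i = l) (hm : ∑ i, y i = m) (i : ZMod n) :
    ∑ j, x j * y (-(i - j)) + ∑ j, y (-j) * x (j - i) = m - l * y (-i) := by
  have e1 : ∑ j, y (-j) * x (j - i) = ∑ j, x (-j) * y (-(i - j)) := by
    rw [← Equiv.sum_comp (Equiv.subLeft i)]
    exact Finset.sum_congr rfl fun j _ => by simp [mul_comm]
  have e2 : ∑ j, h j * y (-(i - j)) = l * y (-i) := by
    rw [← hl, Finset.sum_mul]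
    refine Finset.sum_congr rfl fun j _ => ?_
    rw [← hhy, show -(i - j) - j = -i by ring]
  have e3 : ∑ j, y (-(i - j)) = m := by
    rw [← hm, ← Equiv.sum_comp (Equiv.subRight i) y]
    simp
  have key : ∀ j, x j * y (-(i - j)) + x (-j) * y (-(i - j)) =
      y (-(i - j)) - h j * y (-(i - j)) := fun j => by
    rw [hx, hx, hneg, eq_sub_of_add_eq' (hy j)]
    ring
  rw [e1, ← Finset.sum_add_distrib, Finset.sum_congr rfl fun j _ => key j,
    Finset.sum_sub_distrib, e2, e3]

end Convolution

lemma mem_vCoset {n v l : ℕ} [NeZero n] (hn : n = v * l) (a : ℕ) (i : ZMod n) :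
    i ∈ vCoset n v l a ↔ i - a ∈ AddSubgroup.zmultiples (v : ZMod n) := by
  have hl : 0 < l := Nat.pos_of_ne_zero fun h => NeZero.ne n (by simp [hn, h])
  have hvl : (v : ZMod n) * l = 0 := by
    rw [← Nat.cast_mul, ← hn, ZMod.natCast_self]
  simp only [vCoset, Finset.mem_image, Finset.mem_range, AddSubgroup.mem_zmultiples_iff]
  constructor
  · rintro ⟨j, -, rfl⟩
    exact ⟨j, by push_cast; simp [mul_comm]⟩
  · rintro ⟨k, hk⟩
    -- multiples of `v` only depend on the multiplier modulo `l`
    have h0 : 0 ≤ k % l := Int.emod_nonneg _ (by omega)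
    have h1 : k % l < l := Int.emod_lt_of_pos _ (by omega)
    refine ⟨(k % l).toNat, by omega, ?_⟩
    have h2 : (((k % l).toNat : ℕ) : ZMod n) = ((k % l : ℤ) : ZMod n) := by
      rw [← Int.cast_natCast, Int.toNat_of_nonneg h0]
    rw [zsmul_eq_mul] at hk
    push_cast
    rw [h2, Int.emod_def]
    push_cast
    linear_combination hk - ((k / l : ℤ) : ZMod n) * hvl

lemma vCoset_injOn {n v l : ℕ} [NeZero n] (hv : 0 < v) (hn : n = v * l) :
    Set.InjOn (fun j : ℕ => ((0 + v * j : ℕ) : ZMod n)) (Finset.range l) := by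
  intro j hj k hk hjk
  simp only [Finset.coe_range, Set.mem_Iio] at hj hk
  have lt : ∀ m < l, 0 + v * m < n := fun m hm => by
    rw [hn, zero_add]; exact Nat.mul_lt_mul_of_pos_left hm hv
  have := congrArg ZMod.val hjk
  simp only at this
  rw [ZMod.val_cast_of_lt (lt j hj), ZMod.val_cast_of_lt (lt k hk), zero_add, zero_add] at this
  exact Nat.eq_of_mul_eq_mul_left hv this

lemma cycBar_apply {n : ℕ} (Z : Finset (ZMod n)) (i : ZMod n) : (cycBar n Z).coeff i = ind Z i := by
  simp [cycBar, ind, Finsupp.finsetSum_apply, Finsupp.single_apply]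

/-- Distinct `j < l` give distinct exponents `vj`, so `vCosetBar` is a sum without repetition. -/
lemma vCosetBar_eq {n v l : ℕ} [NeZero n] (hv : 0 < v) (hn : n = v * l) :
    vCosetBar n v l 0 = cycBar n (vCoset n v l 0) := by
  rw [cycBar, vCoset, Finset.sum_image (vCoset_injOn hv hn), vCosetBar]

lemma ind_dihedralS_r {n : ℕ} (X Y : Finset (ZMod n)) (i : ZMod n) :
    ind (dihedralS n X Y) (.r i) = ind X i := by
  simp [ind, dihedralS]

lemma ind_dihedralS_sr {n : ℕ} (X Y : Finset (ZMod n)) (i : ZMod n) :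
    ind (dihedralS n X Y) (.sr i) = ind Y (-i) := by
  simp [ind, dihedralS, neg_eq_iff_eq_neg]

/-- Construction: let `v` be an odd positive divisor of `n`, `l = n/v`, let
`Y = T⟨x^v⟩` with `e ∈ T ⊆ {e, x, …, x^{v−1}}`, `X = Y \ ⟨x^v⟩`, and suppose
`Ȳ + Ȳ⁽⁻¹⁾ = C̄_n + ⟨x^v⟩‾` (as multisets, `Y ⊎ Y⁽⁻¹⁾ = C_n ⊎ ⟨x^v⟩`).
Then `C(D_n, X ∪ Ya)` is a DSRG with parameters
`(2n, n, (n+l)/2, (n−l)/2, (n+l)/2)`. -/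
theorem dihedral_construction_XYa (n v l : ℕ) [NeZero n]
    (hv : 0 < v) (hodd : Odd v) (hn : n = v * l)
    (X Y : Finset (ZMod n))
    (hT : ∃ T ⊆ Finset.range v, 0 ∈ T ∧ Y = T.biUnion (vCoset n v l))
    (hX : X = Y \ vCoset n v l 0)
    (hmulti : cycBar n Y + cycBar n (Y.image (fun i => -i)) =
      cycBar n Finset.univ + vCosetBar n v l 0) :
    IsDSRG (cayleyAdj (DihedralGroup n) (dihedralS n X Y))
      (2 * n) (n : ℤ) (((n : ℤ) + l) / 2) (((n : ℤ) - l) / 2) (((n : ℤ) + l) / 2) := by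
  obtain ⟨T, -, hT0, hYT⟩ := hT
  set H := vCoset n v l 0 with hHdef
  have memH : ∀ i, i ∈ H ↔ i ∈ AddSubgroup.zmultiples (v : ZMod n) := fun i => by
    simpa using mem_vCoset hn 0 i
  have hHY : H ⊆ Y := hYT ▸ Finset.subset_biUnion_of_mem (vCoset n v l) hT0
  have hcardH : (H.card : ℤ) = l := by
    rw [hHdef, vCoset, Finset.card_image_of_injOn (vCoset_injOn hv hn), Finset.card_range]
  have hx : ∀ i, ind X i = ind Y i - ind H i := fun i => by
    have := @hHY i
    simp only [ind, hX, Finset.mem_sdiff]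
    by_cases h1 : i ∈ Y <;> by_cases h2 : i ∈ H <;> simp_all
  have hy : ∀ i, ind Y i + ind Y (-i) = 1 + ind H i := fun i => by
    rw [vCosetBar_eq hv hn] at hmulti
    have := congrArg (fun f => f.coeff i) hmulti
    simpa [cycBar_apply, ind, neg_eq_iff_eq_neg] using this
  have hhh : ∀ i j, ind H j * ind H (i - j) = ind H j * ind H i := fun i j => by
    by_cases hj : j ∈ H
    · have : i - j ∈ H ↔ i ∈ H := by
        rw [memH, memH, sub_eq_add_neg]
        exact AddSubgroup.add_mem_cancel_right _ (neg_mem ((memH j).1 hj))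
      simp [ind, this]
    · simp [ind, hj]
  have hhy : ∀ i j, ind H j * ind Y (i - j) = ind H j * ind Y i := fun i j => by
    by_cases hj : j ∈ H
    · have : i - j ∈ Y ↔ i ∈ Y := by
        simp only [hYT, Finset.mem_biUnion, mem_vCoset hn]
        refine exists_congr fun a => and_congr_right fun _ => ?_
        rw [sub_right_comm, sub_eq_add_neg _ j]
        exact AddSubgroup.add_mem_cancel_right _ (neg_mem ((memH j).1 hj))
      simp [ind, this]
    · simp [ind, hj]
  have hneg : ∀ i, ind H (-i) = ind H i := fun i => by
    simp [ind, memH]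
  have hl : ∑ i, ind H i = (l : ℤ) := by rw [sum_ind, hcardH]
  have hcardY : 2 * (Y.card : ℤ) = n + l := by
    have h1 : ∑ i, ind Y (-i) = ∑ i, ind Y i := Equiv.sum_comp (Equiv.neg (ZMod n)) (ind Y)
    have h2 := Finset.sum_congr (rfl : (Finset.univ : Finset (ZMod n)) = _) fun i _ => hy i
    rw [Finset.sum_add_distrib, Finset.sum_add_distrib, h1, sum_ind, hl] at h2
    simp only [Finset.sum_const, Finset.card_univ, ZMod.card, nsmul_eq_mul, mul_one] at h2
    linarith
  rw [show ((n : ℤ) + l) / 2 = Y.card by omega, show ((n : ℤ) - l) / 2 = Y.card - l by omega]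
  apply cayley_isDSRG
  · rw [← Nat.card_eq_fintype_card, DihedralGroup.nat_card]
    push_cast
    rfl
  · have h0 : (0 : ZMod n) ∈ H := (memH 0).2 (zero_mem _)
    rw [DihedralGroup.one_def]
    simp [dihedralS, hX, h0, - DihedralGroup.r_zero]
  · have h1 : ∑ i, ind Y (-i) = ∑ i, ind Y i := Equiv.sum_comp (Equiv.neg (ZMod n)) (ind Y)
    rw [← sum_ind, sum_dihedral]
    simp only [ind_dihedralS_r, ind_dihedralS_sr, hx, Finset.sum_sub_distrib]
    rw [h1, hl, sum_ind]
    linarith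
  · rintro (i | i)
    · rw [sum_dihedral]
      have := sq_coeff_r hx hy hhy hhh hl (sum_ind Y) i
      simp only [DihedralGroup.inv_r, DihedralGroup.inv_sr, DihedralGroup.r_mul_r,
        DihedralGroup.r_mul_sr, ind_dihedralS_r, ind_dihedralS_sr, neg_sub, ← sub_eq_add_neg,
        sub_sub_cancel]
      exact this
    · rw [sum_dihedral]
      have := sq_coeff_sr hx hy hneg hhy hl (sum_ind Y) i
      simp only [DihedralGroup.inv_r, DihedralGroup.inv_sr, DihedralGroup.sr_mul_r,
        DihedralGroup.sr_mul_sr, ind_dihedralS_r, ind_dihedralS_sr, ← sub_eq_add_neg,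
        sub_sub_cancel]
      exact this
end
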